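/- The X₂^{(1)}-Hermite polynomials H⁽¹⁾_n := Wr(H₁,H₂,H_n) satisfy: (i) for every odd natural n ≥ 3 and all z, H⁽¹⁾_n(z) = ((−1)^{(n+1)/2}·8·n!·2^{(n+1)/2} / ∏_{j=1}^{(n−3)/2}(n − 2(1+j) + 1))·ν_n(z); (ii) for every even natural n ≥ 4 and all z, H⁽¹⁾_n(z) = ((−1)^{(n+2)/2}·8·n!·2^{n/2} / (n·∏_{j=1}^{(n−4)/2}(n − 2(1+j))))·μ_n(z); (iii) H⁽¹⁾_0(z) = 16·μ_0(z) for all z. -/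

import Mathlib

/-- Physicists' Hermite polynomials via the Rodrigues formula (complex version). -/
noncomputable def Hc (n : ℕ) (z : ℂ) : ℂ :=
  (-1) ^ n * Complex.exp (z ^ 2) * iteratedDeriv n (fun t => Complex.exp (-t ^ 2)) z

/-- The function Ĥₙ. -/
noncomputable def Hhatc (n : ℕ) (z : ℂ) : ℂ :=
  Hc n z + 4 * (n : ℂ) * Hc (n - 2) z + 4 * (n : ℂ) * ((n : ℂ) - 3) * Hc (n - 4) z

/-- Even coefficients c_{2k}(n) of the generalized power series. -/
noncomputable def ceven (n k : ℕ) : ℂ :=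
  if k = 0 then 1
  else if k = 1 then -(n : ℂ)
  else (-1) ^ k * 2 ^ k * (n : ℂ) * ((n : ℂ) - ((2 * (k : ℂ) - 1) ^ 2 + 1)) *
    (∏ j ∈ Finset.Icc 1 (k - 2), ((n : ℂ) - 2 * (1 + (j : ℂ)))) /
      (Nat.factorial (2 * k) : ℂ)

/-- Odd coefficients: `codd n k` is c_{2k-1}(n), for k ≥ 1. -/
noncomputable def codd (n k : ℕ) : ℂ :=
  if k ≤ 1 then 1
  else (-1) ^ (k + 1) * 2 ^ (k - 1) * ((n : ℂ) - ((2 * ((k : ℂ) - 1)) ^ 2 + 1)) *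
    (∏ j ∈ Finset.Icc 1 (k - 2), ((n : ℂ) - (2 * (1 + (j : ℂ)) - 1))) /
      (Nat.factorial (2 * k - 1) : ℂ)

/-- μₙ(z) = Σ_{k≥0} c_{2k}(n)·z^{2k}. -/
noncomputable def muF (n : ℕ) (z : ℂ) : ℂ := ∑' k : ℕ, ceven n k * z ^ (2 * k)

/-- νₙ(z) = Σ_{k≥1} c_{2k-1}(n)·z^{2k-1}. -/
noncomputable def nuF (n : ℕ) (z : ℂ) : ℂ := ∑' k : ℕ, codd n (k + 1) * z ^ (2 * k + 1)

/-- βₙ = μₙ + νₙ. -/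
noncomputable def betaF (n : ℕ) (z : ℂ) : ℂ := muF n z + nuF n z

/-- Wronskian of three complex functions. -/
noncomputable def Wrc (f g h : ℂ → ℂ) (z : ℂ) : ℂ :=
  Matrix.det !![f z, g z, h z;
                deriv f z, deriv g z, deriv h z;
                deriv (deriv f) z, deriv (deriv g) z, deriv (deriv h) z]

/-- The X₂⁽¹⁾-Hermite polynomials. -/
noncomputable def H1exc (n : ℕ) (z : ℂ) : ℂ := Wrc (Hc 1) (Hc 2) (Hc n) z

open Polynomial in
noncomputable def PH : ℕ → Polynomial ℂ
  | 0 => 1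
  | n + 1 => 2 * X * PH n - derivative (PH n)

open Polynomial in
lemma iter_PH (n : ℕ) : iteratedDeriv n (fun t : ℂ => Complex.exp (-t ^ 2)) =
    fun t => (-1) ^ n * (PH n).eval t * Complex.exp (-t ^ 2) := by
  induction n with
  | zero => funext t; simp [PH]
  | succ n ih =>
    rw [iteratedDeriv_succ, ih]
    funext t
    have h1 : HasDerivAt (fun t : ℂ => Complex.exp (-t ^ 2)) (Complex.exp (-t ^ 2) * (-(2 * t))) t := by
      have := ((hasDerivAt_pow 2 t).neg).cexp
      simpa using this
    have h2 := (((PH n).hasDerivAt t).const_mul ((-1) ^ n)).mul h1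
    have h3 := h2.deriv
    refine Eq.trans h3 ?_
    simp [PH, pow_succ]
    ring

lemma Hc_eq (n : ℕ) : Hc n = fun z => (PH n).eval z := by
  funext z
  have h : Complex.exp (z ^ 2) * Complex.exp (-z ^ 2) = 1 := by
    rw [← Complex.exp_add]; simp
  have h2 : ((-1 : ℂ) ^ n) * (-1) ^ n = 1 := by
    rw [← mul_pow]; simp
  simp only [Hc, iter_PH]
  linear_combination (PH n).eval z * (-1 : ℂ) ^ n * (-1) ^ n * h + (PH n).eval z * h2

open Polynomial in
lemma dPH (n : ℕ) : derivative (PH (n + 1)) = 2 * ((n : Polynomial ℂ) + 1) * PH n := by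
  induction n with
  | zero => simp [PH]
  | succ n ih =>
    have e : PH (n + 1 + 1) = 2 * X * PH (n + 1) - derivative (PH (n + 1)) := rfl
    have e1 : PH (n + 1) = 2 * X * PH n - derivative (PH n) := rfl
    rw [e, ih]
    have hd : derivative (2 * X * PH (n + 1) - 2 * ((n : Polynomial ℂ) + 1) * PH n)
        = 2 * PH (n + 1) + 2 * X * derivative (PH (n + 1))
          - 2 * ((n : Polynomial ℂ) + 1) * derivative (PH n) := by
      simp
    rw [hd, ih]
    push_cast
    linear_combination (- 2 * ((n : Polynomial ℂ) + 1)) * e1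

open Polynomial in
lemma odePH (n : ℕ) : derivative (derivative (PH n)) =
    2 * X * derivative (PH n) - 2 * (n : Polynomial ℂ) * PH n := by
  have e : PH (n + 1) = 2 * X * PH n - derivative (PH n) := rfl
  have h := congrArg derivative e
  rw [dPH] at h
  simp at h
  linear_combination h

open Polynomial in
lemma coeff_rec (n i : ℕ) : (PH n).coeff (i + 2) * ((i + 2) * (i + 1)) =
    -2 * (n - i) * (PH n).coeff i := by
  have h := congrArg (fun p => Polynomial.coeff p i) (odePH n)
  have e : 2 * X * derivative (PH n) - 2 * (n : Polynomial ℂ) * PH n =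
    C 2 * (X * derivative (PH n)) - C (2 * (n : ℂ)) * PH n := by
    have e2 : (C 2 : Polynomial ℂ) = 2 := rfl
    rw [C_mul, e2, C_eq_natCast]
    ring
  rw [e] at h
  simp only [coeff_sub, coeff_C_mul, coeff_derivative] at h
  cases i with
  | zero => simp at h ⊢; linear_combination h
  | succ i =>
    simp only [coeff_X_mul, coeff_derivative] at h
    push_cast at h ⊢
    linear_combination h

lemma a0_succ (n : ℕ) : (PH (n + 2)).coeff 0 = -2 * (n + 1) * (PH n).coeff 0 := by
  have e : PH (n + 2) = 2 * Polynomial.X * PH (n + 1) - Polynomial.derivative (PH (n + 1)) := rfl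
  rw [e, dPH]
  simp [Polynomial.mul_coeff_zero]

lemma a1_succ (n : ℕ) : (PH (n + 1)).coeff 1 = 2 * (n + 1) * (PH n).coeff 0 := by
  have h := congrArg (fun p => Polynomial.coeff p 0) (dPH n)
  simp [Polynomial.mul_coeff_zero, Polynomial.coeff_derivative] at h
  exact h

lemma a0_even (m : ℕ) : (PH (2 * m)).coeff 0 * (m.factorial : ℂ) =
    (-1) ^ m * ((2 * m).factorial : ℂ) := by
  induction m with
  | zero => simp [PH]
  | succ m ih =>
    rw [show 2 * (m + 1) = 2 * m + 2 by ring, a0_succ, Nat.factorial_succ, Nat.factorial_succ,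
      Nat.factorial_succ]
    push_cast
    linear_combination (-2 * (2 * (m : ℂ) + 1) * (m + 1)) * ih

lemma a0_odd (m : ℕ) : (PH (2 * m + 1)).coeff 0 = 0 := by
  induction m with
  | zero => simp [PH]
  | succ m ih =>
    rw [show 2 * (m + 1) + 1 = (2 * m + 1) + 2 by ring, a0_succ, ih]; simp

lemma a1_even (m : ℕ) : (PH (2 * m)).coeff 1 = 0 := by
  cases m with
  | zero => simp [PH, Polynomial.coeff_one]
  | succ m => rw [show 2 * (m + 1) = (2 * m + 1) + 1 by ring, a1_succ, a0_odd]; simp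

lemma coeff_step0 (n i : ℕ) (h : (PH n).coeff i = 0) : (PH n).coeff (i + 2) = 0 := by
  have := coeff_rec n i
  rw [h, mul_zero] at this
  have h2 : ((i : ℂ) + 2) * (i + 1) ≠ 0 := by
    have : (((i + 2) * (i + 1) : ℕ) : ℂ) ≠ 0 := Nat.cast_ne_zero.mpr (by positivity)
    exact_mod_cast this
  exact (mul_eq_zero.mp this).resolve_right h2

lemma coeff_even_odd (m k : ℕ) : (PH (2 * m)).coeff (2 * k + 1) = 0 := by
  induction k with
  | zero => exact a1_even m
  | succ k ih => exact coeff_step0 _ _ ih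

lemma coeff_odd_even (m k : ℕ) : (PH (2 * m + 1)).coeff (2 * k) = 0 := by
  induction k with
  | zero => exact a0_odd m
  | succ k ih => exact coeff_step0 _ _ ih

open Polynomial in
noncomputable def WP (n : ℕ) : Polynomial ℂ :=
  C 16 * PH n - C 16 * (X * derivative (PH n)) + C 8 * (X * (X * derivative (derivative (PH n))))
    + C 4 * derivative (derivative (PH n))

open Polynomial in
lemma WP_coeff (n i : ℕ) : (WP n).coeff i =
    -8 * (PH n).coeff i * ((n : ℂ) - (((i : ℂ) - 1) ^ 2 + 1)) := by
  have h := coeff_rec n i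
  rcases i with _ | _ | i
  · simp [WP, coeff_derivative] at h ⊢
    linear_combination 4 * h
  · simp [WP, coeff_derivative, coeff_X_mul] at h ⊢
    norm_num at h ⊢
    linear_combination 4 * h
  · simp only [WP, coeff_add, coeff_sub, coeff_C_mul, coeff_X_mul, coeff_derivative]
    push_cast at h ⊢
    linear_combination 4 * h

open Polynomial in
lemma H1exc_eq (n : ℕ) (z : ℂ) : H1exc n z = (WP n).eval z := by
  have d : ∀ p : Polynomial ℂ, deriv (fun x => p.eval x) = fun x => p.derivative.eval x := by
    intro p; funext x; exact p.deriv
  simp only [H1exc, Wrc, Hc_eq, d, Matrix.det_fin_three]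
  simp [PH, WP]
  ring

lemma hasSum_eval (p : Polynomial ℂ) (z : ℂ) : HasSum (fun i => p.coeff i * z ^ i) (p.eval z) := by
  rw [Polynomial.eval_eq_sum_range]
  apply hasSum_sum_of_ne_finset_zero
  intro b hb
  rw [Polynomial.coeff_eq_zero_of_natDegree_lt (by simpa [Nat.lt_succ_iff] using hb), zero_mul]

lemma eval_even (p : Polynomial ℂ) (z : ℂ) (h : ∀ k, p.coeff (2 * k + 1) = 0) :
    p.eval z = ∑' k : ℕ, p.coeff (2 * k) * z ^ (2 * k) := by
  have hs := hasSum_eval p z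
  have h1 : Function.Injective (fun k : ℕ => 2 * k) := fun a b hab => by simpa using hab
  refine (((Function.Injective.hasSum_iff h1 ?_).2 hs).tsum_eq).symm
  intro x hx
  rcases Nat.even_or_odd' x with ⟨k, rfl | rfl⟩
  · exact absurd ⟨k, rfl⟩ hx
  · simp [h]

lemma eval_odd (p : Polynomial ℂ) (z : ℂ) (h : ∀ k, p.coeff (2 * k) = 0) :
    p.eval z = ∑' k : ℕ, p.coeff (2 * k + 1) * z ^ (2 * k + 1) := by
  have hs := hasSum_eval p z
  have h1 : Function.Injective (fun k : ℕ => 2 * k + 1) := fun a b hab => by simpa using hab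
  refine (((Function.Injective.hasSum_iff h1 ?_).2 hs).tsum_eq).symm
  intro x hx
  rcases Nat.even_or_odd' x with ⟨k, rfl | rfl⟩
  · simp [h]
  · exact absurd ⟨k, rfl⟩ hx

lemma coeff_even_formula (n k : ℕ) : (PH n).coeff (2 * (k + 2)) * ((2 * (k + 2)).factorial : ℂ) =
    (-1) ^ k * 2 ^ (k + 2) * n * (n - 2) *
      (∏ j ∈ Finset.Icc 1 k, ((n : ℂ) - 2 * (1 + (j : ℂ)))) * (PH n).coeff 0 := by
  induction k with
  | zero =>
    have h0 := coeff_rec n 0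
    have h2 := coeff_rec n 2
    norm_num [Nat.factorial] at h0 h2 ⊢
    linear_combination 2 * h2 - 2 * (n - 2) * h0
  | succ k ih =>
    have h := coeff_rec n (2 * (k + 2))
    rw [Finset.prod_Icc_succ_top (by omega), show 2 * (k + 1 + 2) = 2 * (k + 2) + 2 by ring,
      Nat.factorial_succ, Nat.factorial_succ]
    push_cast at h ⊢
    linear_combination ((2 * (k + 2)).factorial : ℂ) * h - 2 * (n - 2 * (k + 2)) * ih

lemma coeff_odd_formula (n k : ℕ) : (PH n).coeff (2 * (k + 1) + 1) *
      ((2 * (k + 1) + 1).factorial : ℂ) =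
    (-1) ^ (k + 1) * 2 ^ (k + 1) * (n - 1) *
      (∏ j ∈ Finset.Icc 1 k, ((n : ℂ) - (2 * (1 + (j : ℂ)) - 1))) * (PH n).coeff 1 := by
  induction k with
  | zero =>
    have h0 := coeff_rec n 1
    norm_num [Nat.factorial] at h0 ⊢
    linear_combination h0
  | succ k ih =>
    have h := coeff_rec n (2 * (k + 1) + 1)
    rw [Finset.prod_Icc_succ_top (by omega), show 2 * (k + 1 + 1) + 1 = 2 * (k + 1) + 1 + 2 by ring,
      Nat.factorial_succ, Nat.factorial_succ]
    push_cast at h ⊢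
    linear_combination ((2 * (k + 1) + 1).factorial : ℂ) * h - 2 * (n - (2 * (k + 1) + 1)) * ih

lemma W_even (n k : ℕ) : (WP n).coeff (2 * k) = (-8 * (n - 2) * (PH n).coeff 0) * ceven n k := by
  rw [WP_coeff]
  rcases k with _ | _ | k
  · simp [ceven]; ring
  · have h0 := coeff_rec n 0
    norm_num [ceven] at h0 ⊢
    linear_combination (-4) * (n - 2) * h0
  · have h := coeff_even_formula n k
    have hf : ((2 * (k + 2)).factorial : ℂ) ≠ 0 := by exact_mod_cast Nat.factorial_ne_zero _
    rw [← eq_div_iff hf] at h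
    rw [show k + 1 + 1 = k + 2 from rfl, h]
    simp only [ceven, show k + 2 ≠ 0 by omega, show k + 2 ≠ 1 by omega, if_false,
      Nat.add_sub_cancel]
    push_cast
    ring

lemma W_odd (n k : ℕ) : (WP n).coeff (2 * k + 1) =
    (-8 * (n - 1) * (PH n).coeff 1) * codd n (k + 1) := by
  rw [WP_coeff]
  rcases k with _ | k
  · simp [codd]; ring
  · have h := coeff_odd_formula n k
    have hf : ((2 * (k + 1) + 1).factorial : ℂ) ≠ 0 := by exact_mod_cast Nat.factorial_ne_zero _
    rw [← eq_div_iff hf] at h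
    rw [h]
    simp only [codd, show ¬ (k + 1 + 1 ≤ 1) by omega, if_false,
      show k + 1 + 1 - 2 = k by omega, show k + 1 + 1 - 1 = k + 1 by omega,
      show 2 * (k + 1 + 1) - 1 = 2 * (k + 1) + 1 by omega]
    push_cast
    ring

lemma prod_fact (m : ℕ) : ∏ j ∈ Finset.Icc 1 m, (2 * ((m : ℂ) + 1 - j)) =
    2 ^ m * (m.factorial : ℂ) := by
  have h : ∏ j ∈ Finset.Icc 1 m, (2 * ((m : ℂ) + 1 - j)) = ∏ j ∈ Finset.Icc 1 m, (2 * (j : ℂ)) := by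
    refine Finset.prod_bij' (fun j _ => m + 1 - j) (fun j _ => m + 1 - j) ?_ ?_ ?_ ?_ ?_
    · intro a ha; simp at ha ⊢; omega
    · intro a ha; simp at ha ⊢; omega
    · intro a ha; simp at ha ⊢; omega
    · intro a ha; simp at ha ⊢; omega
    · intro a ha
      simp at ha
      rw [Nat.cast_sub (by omega)]; push_cast; rfl
  rw [h]
  clear h
  induction m with
  | zero => simp
  | succ m ih =>
    rw [Finset.prod_Icc_succ_top (by omega), ih, Nat.factorial_succ]
    push_cast
    ring

theorem stmt15 :
    (∀ n : ℕ, Odd n → 3 ≤ n → ∀ z : ℂ,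
      H1exc n z =
        ((-1) ^ ((n + 1) / 2) * 8 * (Nat.factorial n : ℂ) * 2 ^ ((n + 1) / 2) /
          ∏ j ∈ Finset.Icc 1 ((n - 3) / 2), ((n : ℂ) - 2 * (1 + (j : ℂ)) + 1)) * nuF n z) ∧
    (∀ n : ℕ, Even n → 4 ≤ n → ∀ z : ℂ,
      H1exc n z =
        ((-1) ^ ((n + 2) / 2) * 8 * (Nat.factorial n : ℂ) * 2 ^ (n / 2) /
          ((n : ℂ) * ∏ j ∈ Finset.Icc 1 ((n - 4) / 2), ((n : ℂ) - 2 * (1 + (j : ℂ))))) *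
            muF n z) ∧
    (∀ z : ℂ, H1exc 0 z = 16 * muF 0 z) := by
  refine ⟨?_, ?_, ?_⟩
  · rintro n ⟨m, rfl⟩ hn z
    obtain ⟨m, rfl⟩ : ∃ l, m = l + 1 := ⟨m - 1, by omega⟩
    rw [H1exc_eq, eval_odd _ _ (fun k => by rw [WP_coeff, coeff_odd_even]; simp), nuF,
      ← tsum_mul_left]
    refine tsum_congr fun k => ?_
    rw [W_odd, mul_assoc]
    congr 1
    rw [show (2 * (m + 1) + 1 + 1) / 2 = m + 2 by omega, show (2 * (m + 1) + 1 - 3) / 2 = m by omega]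
    have hp : ∏ j ∈ Finset.Icc 1 m, (((2 * (m + 1) + 1 : ℕ) : ℂ) - 2 * (1 + (j : ℂ)) + 1) =
        2 ^ m * (m.factorial : ℂ) := by
      rw [← prod_fact]
      refine Finset.prod_congr rfl fun j _ => ?_
      push_cast; ring
    have hf : (m.factorial : ℂ) ≠ 0 := by exact_mod_cast Nat.factorial_ne_zero _
    rw [hp, eq_div_iff (mul_ne_zero (by simp) hf), a1_succ]
    have h := a0_even (m + 1)
    rw [Nat.factorial_succ] at h
    rw [Nat.factorial_succ (2 * (m + 1))]
    push_cast at h ⊢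
    linear_combination (-8 * 2 * 2 * (2 * ((m : ℂ) + 1) + 1) * 2 ^ m) * h
  · rintro n ⟨m, rfl⟩ hn z
    obtain ⟨m, rfl⟩ : ∃ l, m = l + 2 := ⟨m - 2, by omega⟩
    rw [← two_mul] at *
    rw [H1exc_eq, eval_even _ _ (fun k => by rw [WP_coeff, coeff_even_odd]; simp), muF,
      ← tsum_mul_left]
    refine tsum_congr fun k => ?_
    rw [W_even, mul_assoc]
    congr 1
    rw [show (2 * (m + 2) + 2) / 2 = m + 3 by omega, show (2 * (m + 2) - 4) / 2 = m by omega,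
      show 2 * (m + 2) / 2 = m + 2 by omega]
    have hp : ∏ j ∈ Finset.Icc 1 m, (((2 * (m + 2) : ℕ) : ℂ) - 2 * (1 + (j : ℂ))) =
        2 ^ m * (m.factorial : ℂ) := by
      rw [← prod_fact]
      refine Finset.prod_congr rfl fun j _ => ?_
      push_cast; ring
    have hf : (m.factorial : ℂ) ≠ 0 := by exact_mod_cast Nat.factorial_ne_zero _
    have hn : ((2 * (m + 2) : ℕ) : ℂ) ≠ 0 := Nat.cast_ne_zero.mpr (by omega)
    rw [hp, eq_div_iff (mul_ne_zero hn (mul_ne_zero (by simp) hf))]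
    have h := a0_even (m + 2)
    rw [Nat.factorial_succ, Nat.factorial_succ m] at h
    push_cast at h ⊢
    linear_combination (-8 * 2 * 2 * 2 ^ m) * h
  · intro z
    rw [H1exc_eq, eval_even _ _ (fun k => by rw [WP_coeff, coeff_even_odd 0]; simp), muF,
      ← tsum_mul_left]
    refine tsum_congr fun k => ?_
    rw [W_even, mul_assoc]
    simp [PH]
    norm_num
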